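/- Let β ∈ ℝ be such that β/π is irrational, let α, A, B ∈ ℝ, and let k be a nonnegative integer. Then lim_{N→∞} (1/N^{k+1}) Σ_{n=1}^{N} n^k ( A sin(α n + β n²) − B cos(α n + β n²) )² = (A² + B²)/(2(k+1)). -/

import Mathlib

open Filter Finset

lemma aux_shift (u : ℕ → ℂ) (hu : ∀ n, ‖u n‖ ≤ 1) (N h : ℕ) :
    ‖∑ n ∈ range N, u (n + h) - ∑ n ∈ range N, u n‖ ≤ 2 * h := by
  induction h with
  | zero => simp
  | succ h ih =>
    have e : ∑ n ∈ range N, u (n + (h + 1)) - ∑ n ∈ range N, u n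
        = (∑ n ∈ range N, u (n + h) - ∑ n ∈ range N, u n) + (u (N + h) - u h) := by
      have h1 := Finset.sum_range_succ (fun n => u (n + h)) N
      have h2 := Finset.sum_range_succ' (fun n => u (n + h)) N
      have h3 : ∑ n ∈ range N, u (n + (h + 1)) = ∑ n ∈ range N, u (n + 1 + h) :=
        Finset.sum_congr rfl fun n _ => by congr 1; ring
      simp only [zero_add] at h2
      rw [h3]
      linear_combination h1 - h2
    rw [e]
    have h4 := norm_sub_le (u (N + h)) (u h)
    have h5 := norm_add_le (∑ n ∈ range N, u (n + h) - ∑ n ∈ range N, u n) (u (N + h) - u h)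
    have := hu (N + h)
    have := hu h
    push_cast
    linarith

lemma aux_vdc (u : ℕ → ℂ) (hu : ∀ n, ‖u n‖ ≤ 1)
    (hc : ∀ h h' : ℕ, h ≠ h' → ∃ C : ℝ, ∀ N : ℕ,
      ‖∑ n ∈ range N, u (n + h) * (starRingEnd ℂ) (u (n + h'))‖ ≤ C)
    (ε : ℝ) (hε : 0 < ε) :
    ∃ K : ℝ, 0 ≤ K ∧ ∀ N : ℕ, ‖∑ n ∈ range N, u n‖ ≤ ε * N + K := by
  have hc' : ∀ h h' : ℕ, ∃ C : ℝ, 0 ≤ C ∧ ∀ N : ℕ,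
      ‖∑ n ∈ range N, u (n + h) * (starRingEnd ℂ) (u (n + h'))‖
        ≤ (if h = h' then (N : ℝ) else 0) + C := by
    intro h h'
    by_cases e : h = h'
    · refine ⟨0, le_rfl, fun N => ?_⟩
      rw [if_pos e, add_zero]
      refine (norm_sum_le _ _).trans ?_
      refine (Finset.sum_le_card_nsmul _ _ 1 fun n _ => ?_).trans (by simp)
      rw [norm_mul, RCLike.norm_conj]
      exact mul_le_one₀ (hu _) (norm_nonneg _) (hu _)
    · obtain ⟨C, hC⟩ := hc h h' e
      exact ⟨C, (norm_nonneg _).trans (hC 0), fun N => by simpa [e] using hC N⟩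
  choose C hC0 hC using hc'
  obtain ⟨H, hH⟩ := exists_nat_gt (1 / ε ^ 2)
  have hHpos : (0 : ℝ) < H := lt_trans (by positivity) hH
  have hH1 : 1 ≤ H * ε ^ 2 := by
    rw [div_lt_iff₀ (by positivity)] at hH
    exact hH.le
  set D : ℝ := ∑ h ∈ range H, ∑ h' ∈ range H, C h h' with hD
  have hD0 : 0 ≤ D := Finset.sum_nonneg fun _ _ => Finset.sum_nonneg fun _ _ => hC0 _ _
  refine ⟨(D / (2 * H * ε) + 2 * H * H) / H, by positivity, fun N => ?_⟩
  set z := ∑ n ∈ range N, u n with hz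
  set T := ∑ n ∈ range N, ∑ h ∈ range H, u (n + h) with hT
  -- T close to H z
  have h1 : ‖T - H * z‖ ≤ 2 * H * H := by
    have : T - H * z = ∑ h ∈ range H, (∑ n ∈ range N, u (n + h) - z) := by
      rw [hT, Finset.sum_comm, Finset.sum_sub_distrib]; simp
    rw [this]
    refine (norm_sum_le _ _).trans ?_
    refine (Finset.sum_le_card_nsmul _ _ (2 * (H : ℝ)) fun h hh => ?_).trans (by simp; linarith)
    refine (aux_shift u hu N h).trans ?_
    have : (h : ℝ) ≤ H := by exact_mod_cast (Finset.mem_range.mp hh).le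
    linarith
  have h2 : ∑ n ∈ range N, ‖∑ h ∈ range H, u (n + h)‖ ^ 2 ≤ H * N + D := by
    have e : ((∑ n ∈ range N, ‖∑ h ∈ range H, u (n + h)‖ ^ 2 : ℝ) : ℂ)
        = ∑ h ∈ range H, ∑ h' ∈ range H, ∑ n ∈ range N,
            u (n + h) * (starRingEnd ℂ) (u (n + h')) := by
      push_cast
      simp_rw [← Complex.mul_conj', map_sum, Finset.sum_mul_sum]
      rw [Finset.sum_comm]
      refine Finset.sum_congr rfl fun h _ => ?_
      rw [Finset.sum_comm]
    have e2 : ∑ n ∈ range N, ‖∑ h ∈ range H, u (n + h)‖ ^ 2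
        = ‖∑ h ∈ range H, ∑ h' ∈ range H, ∑ n ∈ range N,
            u (n + h) * (starRingEnd ℂ) (u (n + h'))‖ := by
      rw [← e, Complex.norm_real, Real.norm_of_nonneg]
      positivity
    rw [e2]
    calc _ ≤ ∑ h ∈ range H, ∑ h' ∈ range H, ((if h = h' then (N : ℝ) else 0) + C h h') := by
          refine (norm_sum_le _ _).trans (Finset.sum_le_sum fun h _ => ?_)
          exact (norm_sum_le _ _).trans (Finset.sum_le_sum fun h' _ => hC h h' N)
      _ = _ := by
          simp only [Finset.sum_add_distrib, Finset.sum_ite_eq]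
          rw [Finset.sum_congr rfl (g := fun _ => (N : ℝ)) (fun x hx => if_pos hx)]
          simp [hD]
  have h3 : ‖T‖ ^ 2 ≤ N * (H * N + D) := by
    have := sq_sum_le_card_mul_sum_sq (s := range N)
      (f := fun n => ‖∑ h ∈ range H, u (n + h)‖)
    rw [Finset.card_range] at this
    calc ‖T‖ ^ 2 ≤ (∑ n ∈ range N, ‖∑ h ∈ range H, u (n + h)‖) ^ 2 := by
          gcongr; exact norm_sum_le _ _
      _ ≤ _ := this
      _ ≤ _ := by gcongr
  have h4 : ‖T‖ ≤ H * ε * N + D / (2 * H * ε) := by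
    refine abs_le_of_sq_le_sq' (h3.trans ?_) (by positivity) |>.2
    have e : (H * ε * N + D / (2 * H * ε)) ^ 2
        = H * N ^ 2 * (H * ε ^ 2) + N * D + (D / (2 * H * ε)) ^ 2 := by
      field_simp
      ring
    rw [e]
    have : H * (N : ℝ) ^ 2 * 1 ≤ H * N ^ 2 * (H * ε ^ 2) := by gcongr
    nlinarith [sq_nonneg (D / (2 * H * ε))]
  have h5 : H * ‖z‖ ≤ H * ε * N + (D / (2 * H * ε) + 2 * H * H) := by
    have : ‖(H : ℂ) * z‖ = H * ‖z‖ := by simp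
    rw [← this]
    have := norm_sub_norm_le ((H : ℂ) * z) T
    rw [norm_sub_rev] at this
    linarith
  have : ε * N + (D / (2 * H * ε) + 2 * H * H) / H
      = (H * ε * N + (D / (2 * H * ε) + 2 * H * H)) / H := by field_simp
  rw [this, le_div_iff₀ hHpos]
  linarith

lemma aux_abel_id (v : ℕ → ℂ) (N : ℕ) :
    ∑ n ∈ range N, ((n : ℂ) + 1) * v n
      = N * ∑ n ∈ range N, v n - ∑ m ∈ range N, ∑ n ∈ range m, v n := by
  induction N with
  | zero => simp
  | succ N ih =>
    rw [Finset.sum_range_succ, ih, Finset.sum_range_succ _ N, Finset.sum_range_succ _ N]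
    push_cast
    ring

lemma aux_abel (u : ℕ → ℂ) (ε K : ℝ) (hε : 0 < ε) (hK : 0 ≤ K)
    (h : ∀ N : ℕ, ‖∑ n ∈ range N, u n‖ ≤ ε * N + K) (k : ℕ) :
    ∀ N : ℕ, ‖∑ n ∈ range N, ((n : ℂ) + 1) ^ k * u n‖ ≤ 2 ^ k * N ^ k * (ε * N + K) := by
  induction k with
  | zero => simpa using h
  | succ k ih =>
    intro N
    have e : ∑ n ∈ range N, ((n : ℂ) + 1) ^ (k + 1) * u n
        = ∑ n ∈ range N, ((n : ℂ) + 1) * (((n : ℂ) + 1) ^ k * u n) :=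
      Finset.sum_congr rfl fun n _ => by ring
    rw [e, aux_abel_id]
    refine (norm_sub_le _ _).trans ?_
    have h1 : ‖(N : ℂ) * ∑ n ∈ range N, ((n : ℂ) + 1) ^ k * u n‖
        ≤ N * (2 ^ k * N ^ k * (ε * N + K)) := by
      rw [norm_mul, Complex.norm_natCast]
      exact mul_le_mul_of_nonneg_left (ih N) (by positivity)
    have h2 : ‖∑ m ∈ range N, ∑ n ∈ range m, ((n : ℂ) + 1) ^ k * u n‖
        ≤ N * (2 ^ k * N ^ k * (ε * N + K)) := by
      refine (norm_sum_le _ _).trans ?_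
      refine (Finset.sum_le_card_nsmul _ _ (2 ^ k * N ^ k * (ε * N + K)) fun m hm => ?_).trans
        (by simp)
      have : (m : ℝ) ≤ N := by exact_mod_cast (Finset.mem_range.mp hm).le
      refine (ih m).trans ?_
      gcongr
    calc _ ≤ _ := add_le_add h1 h2
      _ = _ := by ring

lemma aux_chirp (β : ℝ) (hβ : Irrational (β / Real.pi)) (α : ℝ) (h h' : ℕ) (hh : h ≠ h')
    (u : ℕ → ℂ) (hu : u = fun n : ℕ => Complex.exp
      (((2 * (α * ((n : ℝ) + 1) + β * ((n : ℝ) + 1) ^ 2) : ℝ) : ℂ) * Complex.I)) :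
    ∃ C : ℝ, ∀ N : ℕ,
      ‖∑ n ∈ range N, u (n + h) * (starRingEnd ℂ) (u (n + h'))‖ ≤ C := by
  set w : ℂ := Complex.exp (((4 * β * ((h : ℝ) - h') : ℝ) : ℂ) * Complex.I) with hw
  set c : ℂ := Complex.exp (((2 * α * ((h : ℝ) - h') + 2 * β * ((h : ℝ) - h') * (2 + h + h') : ℝ)
    : ℂ) * Complex.I) with hcdef
  have hw1 : w ≠ 1 := by
    intro e
    rw [hw, Complex.exp_eq_one_iff] at e
    obtain ⟨m, hm⟩ := e
    have hm2 : (4 * β * ((h : ℝ) - h')) = m * (2 * Real.pi) := by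
      have : (((4 * β * ((h : ℝ) - h') : ℝ) : ℂ)) * Complex.I
          = ((m * (2 * Real.pi) : ℝ) : ℂ) * Complex.I := by
        rw [hm]; push_cast; ring
      exact_mod_cast mul_right_cancel₀ Complex.I_ne_zero this
    have hne : ((h : ℝ) - h') ≠ 0 := sub_ne_zero.mpr (by exact_mod_cast hh)
    apply hβ
    refine ⟨(m : ℚ) / (2 * ((h : ℚ) - h')), ?_⟩
    push_cast
    have := Real.pi_ne_zero
    field_simp
    linarith
  have key : ∀ n, u (n + h) * (starRingEnd ℂ) (u (n + h')) = c * w ^ n := by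
    intro n
    rw [hu, hw, hcdef]
    simp only
    rw [← Complex.exp_conj, ← Complex.exp_nat_mul, ← Complex.exp_add, ← Complex.exp_add]
    congr 1
    rw [map_mul, Complex.conj_I, Complex.conj_ofReal]
    push_cast
    ring
  have hwn : ‖w‖ = 1 := Complex.norm_exp_ofReal_mul_I _
  have hcn : ‖c‖ = 1 := Complex.norm_exp_ofReal_mul_I _
  refine ⟨2 / ‖w - 1‖, fun N => ?_⟩
  simp_rw [key]
  rw [← Finset.mul_sum, norm_mul, hcn, one_mul, geom_sum_eq hw1, norm_div]
  gcongr
  refine (norm_sub_le _ _).trans ?_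
  rw [norm_pow, hwn]
  norm_num

lemma aux_pow (k N : ℕ) :
    |∑ n ∈ range N, ((n : ℝ) + 1) ^ k - (N : ℝ) ^ (k + 1) / (k + 1)| ≤ (N : ℝ) ^ k := by
  have hm : MonotoneOn (fun x : ℝ => x ^ k) (Set.Icc ((0 : ℕ) : ℝ) (N : ℕ)) := by
    intro x hx y _ hxy
    have : 0 ≤ x := by simpa using hx.1
    exact pow_le_pow_left₀ this hxy k
  have h1 := hm.sum_le_integral_Ico (Nat.zero_le N)
  have h2 := hm.integral_le_sum_Ico (Nat.zero_le N)
  simp only [Nat.Ico_zero_eq_range, integral_pow] at h1 h2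
  push_cast at h1 h2
  simp only [zero_pow (Nat.succ_ne_zero k), sub_zero] at h1 h2
  have h3 := Finset.sum_range_succ (fun n : ℕ => (n : ℝ) ^ k) N
  have h4 := Finset.sum_range_succ' (fun n : ℕ => (n : ℝ) ^ k) N
  push_cast at h4
  have : (0 : ℝ) ≤ 0 ^ k := by positivity
  rw [abs_le]
  constructor
  · have : (0 : ℝ) ≤ (N : ℝ) ^ k := by positivity
    linarith
  · linarith

/-- Weighted limit of the squared phase-derivative term of a chirp component. -/
theorem statement_8 (β : ℝ) (hβ : Irrational (β / Real.pi)) (α A B : ℝ) (k : ℕ) :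
    Tendsto (fun N : ℕ =>
        (1 / (N : ℝ) ^ (k + 1)) *
          ∑ n ∈ Finset.Icc 1 N,
            (n : ℝ) ^ k *
              (A * Real.sin (α * n + β * n ^ 2) - B * Real.cos (α * n + β * n ^ 2)) ^ 2)
      atTop (nhds ((A ^ 2 + B ^ 2) / (2 * ((k : ℝ) + 1)))) := by
  obtain ⟨u, hu⟩ : ∃ u : ℕ → ℂ, u = fun n : ℕ => Complex.exp
      (((2 * (α * ((n : ℝ) + 1) + β * ((n : ℝ) + 1) ^ 2) : ℝ) : ℂ) * Complex.I) := ⟨_, rfl⟩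
  have hu1 : ∀ n, ‖u n‖ ≤ 1 := fun n => by
    rw [hu]; exact (Complex.norm_exp_ofReal_mul_I _).le
  have hvdc := aux_vdc u hu1 fun h h' hh => aux_chirp β hβ α h h' hh u hu
  set c : ℂ := ⟨(B ^ 2 - A ^ 2) / 2, A * B⟩ with hc
  have hsum : ∀ N : ℕ, ∑ n ∈ Finset.Icc 1 N, (n : ℝ) ^ k *
        (A * Real.sin (α * n + β * n ^ 2) - B * Real.cos (α * n + β * n ^ 2)) ^ 2
      = (A ^ 2 + B ^ 2) / 2 * ∑ n ∈ range N, ((n : ℝ) + 1) ^ k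
        + (c * ∑ n ∈ range N, ((n : ℂ) + 1) ^ k * u n).re := by
    intro N
    rw [Finset.mul_sum, Finset.mul_sum, Complex.re_sum, ← Finset.sum_add_distrib,
      ← Finset.Ico_add_one_right_eq_Icc, Finset.sum_Ico_eq_sum_range]
    refine Finset.sum_congr (by simp) fun n _ => ?_
    have e : c * (((n : ℂ) + 1) ^ k * u n) = (((((n : ℝ) + 1) ^ k : ℝ)) : ℂ) * (c * u n) := by
      push_cast; ring
    rw [e, Complex.re_ofReal_mul, Complex.mul_re, hu]
    simp only [Complex.exp_ofReal_mul_I_re, Complex.exp_ofReal_mul_I_im, hc]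
    push_cast
    rw [add_comm (1 : ℝ) (n : ℝ)]
    generalize α * ((n : ℝ) + 1) + β * ((n : ℝ) + 1) ^ 2 = θ
    rw [Real.sin_two_mul, Real.cos_two_mul]
    have := Real.sin_sq_add_cos_sq θ
    linear_combination (((n : ℝ) + 1) ^ k * A ^ 2) * this
  rw [Metric.tendsto_atTop]
  intro ε hε
  set M : ℝ := ‖c‖ * 2 ^ k + 1 with hM
  have hMpos : 0 < M := by positivity
  obtain ⟨K, hK0, hK⟩ := hvdc (ε / (2 * M)) (by positivity)
  have hT := aux_abel u _ K (by positivity) hK0 hK k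
  set L : ℝ := (A ^ 2 + B ^ 2) / 2 + M * K with hL
  have hL0 : 0 ≤ L := by positivity
  obtain ⟨N0, hN0⟩ := exists_nat_gt (2 * L / ε)
  refine ⟨N0 + 1, fun N hN => ?_⟩
  have hNpos : (0 : ℝ) < N := by exact_mod_cast (by omega : 0 < N)
  have hNL : L < ε / 2 * N := by
    have : (N0 : ℝ) ≤ N := by exact_mod_cast (by omega : N0 ≤ N)
    have h2 := hN0.trans_le this
    rw [div_lt_iff₀ hε] at h2
    linarith
  rw [hsum, Real.dist_eq]
  set P := ∑ n ∈ range N, ((n : ℝ) + 1) ^ k with hP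
  set R := (c * ∑ n ∈ range N, ((n : ℂ) + 1) ^ k * u n).re with hR
  have hPb := aux_pow k N
  have hRb : |R| ≤ M * (N ^ k * (ε / (2 * M) * N + K)) := by
    refine (Complex.abs_re_le_norm _).trans ?_
    rw [norm_mul]
    calc _ ≤ ‖c‖ * (2 ^ k * N ^ k * (ε / (2 * M) * N + K)) := by
          gcongr; exact hT N
      _ = (‖c‖ * 2 ^ k) * (N ^ k * (ε / (2 * M) * N + K)) := by ring
      _ ≤ _ := by gcongr; linarith
  have e : 1 / (N : ℝ) ^ (k + 1) * ((A ^ 2 + B ^ 2) / 2 * P + R)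
      - (A ^ 2 + B ^ 2) / (2 * ((k : ℝ) + 1))
      = ((A ^ 2 + B ^ 2) / 2 * (P - (N : ℝ) ^ (k + 1) / (k + 1)) + R) / (N : ℝ) ^ (k + 1) := by
    field_simp
    ring
  rw [e, abs_div, abs_of_pos (by positivity : (0 : ℝ) < (N : ℝ) ^ (k + 1)),
    div_lt_iff₀ (by positivity)]
  calc _ ≤ (A ^ 2 + B ^ 2) / 2 * N ^ k + M * (N ^ k * (ε / (2 * M) * N + K)) := by
        refine (abs_add_le _ _).trans (add_le_add ?_ hRb)
        rw [abs_mul, abs_of_nonneg (by positivity : (0 : ℝ) ≤ (A ^ 2 + B ^ 2) / 2)]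
        gcongr
    _ = N ^ k * (L + ε / 2 * N) := by
        rw [hL]; field_simp; ring
    _ < N ^ k * (ε / 2 * N + ε / 2 * N) := by gcongr
    _ = _ := by ring
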